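/- There exist universal constants K ≥ 1, C₁ ≥ 1, C₂ ≥ 1 and c > 0 such that the following holds. Let n ≥ 2, k ≥ n, α ≥ 10, γ ≥ 1, and set s = α/√n. Let G be an n×n standard Gaussian random matrix and u, v ∈ ℝⁿ standard Gaussian random vectors, all mutually independent. Run a deterministic t-round adaptive algorithm making k linear measurements per round on the input vec(G) + s·(u⊗v) ∈ ℝ^{n²}, and let Q ∈ ℝ^{tk×n²} be the (random) matrix obtained by stacking all query matrices realized along the run (its rows are orthonormal). Then for every t such that C₁·k·log n ≤ (K·α²·γ²)ᵗ·k and (K·α²·γ²)ᵗ·k ≤ C₂·n², we have Pr[‖Q(u⊗v)‖² ≤ 3K·k·(K·α²·γ²)ᵗ] ≥ (1 − 1/(10γ))ᵗ − n^{−c}. -/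

import Mathlib

/-!
Suppose the input were `y + s x` with `y` Gaussian and `x` fixed. Relative to responses drawn as
independent Gaussians, the likelihood `L_x` of the responses satisfies `L_x² = exp(s² I) L_{2x}`,
where `I = ‖Q x‖²` is the information gathered so far. By Cauchy–Schwarz, an event on which
`I ≤ T` and which has probability at most `exp d` when the responses are independent of `x` has
probability at most `exp((s² T + d) / 2)` in the actual run.

Take for this event that `I` jumps over `T_{j+1}` in round `j + 1` although it was at most `T_j`
before. If the responses are independent of `x = u ⊗ v` then so are the queries, and, after
truncation to `‖u‖² ≤ 6n`, the quantity `‖R (u ⊗ v)‖²` has exponential tails at scale `n` for each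
fixed `R` with orthonormal rows. With `T_j = 3Kk(Kα²γ²)^j` and `K = 120` the gain `T_{j+1}/(24n)`
in the exponent dominates the loss `s² T_j = α² T_j / n`, and the jump probabilities sum to at most
`1/(10γ)`. The truncation costs `exp(-n)`.
-/

open MeasureTheory ProbabilityTheory Matrix
open scoped ENNReal Classical

noncomputable section

/-- Squared Euclidean norm of a finitely-indexed real vector. -/
def sqNorm {ι : Type*} [Fintype ι] (x : ι → ℝ) : ℝ := ∑ i, x i ^ 2

/-- Squared Frobenius norm of a real matrix. -/
def frobSq {m n : Type*} [Fintype m] [Fintype n] (A : Matrix m n ℝ) : ℝ :=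
  ∑ i, ∑ j, A i j ^ 2

/-- Spectral (ℓ₂ operator) norm of a real matrix. -/
def specNorm {m n : Type*} [Fintype m] [Fintype n] (A : Matrix m n ℝ) : ℝ :=
  sSup ((fun x : n → ℝ => Real.sqrt (sqNorm (A.mulVec x))) '' {x | sqNorm x ≤ 1})

/-- `i`-th largest singular value (1-based), characterized via
`σ_i(A) = min {‖A − X‖ : rank X ≤ i − 1}`. -/
def singVal {m n : Type*} [Fintype m] [Fintype n] (A : Matrix m n ℝ) (i : ℕ) : ℝ :=
  sInf {c | ∃ X : Matrix m n ℝ, X.rank ≤ i - 1 ∧ c = specNorm (A - X)}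

/-- Flattening of an `n × n` matrix into a vector in `ℝ^{n²}`. -/
def vec (n : ℕ) (A : Matrix (Fin n) (Fin n) ℝ) : Fin (n * n) → ℝ :=
  fun i => A (finProdFinEquiv.symm i).1 (finProdFinEquiv.symm i).2

/-- `u ⊗ v = vec (u vᵀ) ∈ ℝ^{n²}`. -/
def tensor {n : ℕ} (u v : Fin n → ℝ) : Fin (n * n) → ℝ :=
  vec n (Matrix.of fun i j => u i * v j)

/-- Standard Gaussian measure on `ι → ℝ`. -/
def stdGaussian (ι : Type*) [Fintype ι] : Measure (ι → ℝ) :=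
  Measure.pi fun _ => gaussianReal 0 1

/-- Standard Gaussian measure on `n × n` matrices (as `Fin n → Fin n → ℝ`). -/
def stdGaussianMat (n : ℕ) : Measure (Fin n → Fin n → ℝ) :=
  Measure.pi fun _ => stdGaussian (Fin n)

/-- Query maps of a deterministic `t`-round adaptive algorithm making `k` linear
measurements per round on inputs in `ℝ^N`. -/
def QueryMaps (N k t : ℕ) : Type :=
  (j : Fin t) → (Fin (j : ℕ) → (Fin k → ℝ)) → Matrix (Fin k) (Fin N) ℝ

namespace QueryMaps

variable {N k t : ℕ}

/-- Restriction of a round-`j` history to the first `i` rounds. -/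
def prefixHist {j : Fin t} (h : Fin (j : ℕ) → Fin k → ℝ) {i : Fin t}
    (hij : (i : ℕ) < (j : ℕ)) : Fin (i : ℕ) → Fin k → ℝ :=
  fun l => h ⟨l.1, l.isLt.trans hij⟩

/-- Validity of query maps: measurability, orthonormal rows within each round, and
orthogonality across rounds along consistent histories. -/
def Valid (Q : QueryMaps N k t) : Prop :=
  (∀ (j : Fin t) (i : Fin k) (l : Fin N), Measurable fun h => Q j h i l) ∧
  (∀ (j : Fin t) (h : Fin (j : ℕ) → Fin k → ℝ), Q j h * (Q j h)ᵀ = 1) ∧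
  (∀ (j i : Fin t) (hij : (i : ℕ) < (j : ℕ)) (h : Fin (j : ℕ) → Fin k → ℝ),
      Q j h * (Q i (prefixHist h hij))ᵀ = 0)

/-- Responses of the algorithm under exact linear measurements of `a`. -/
def resp (Q : QueryMaps N k t) (a : Fin N → ℝ) (j : Fin t) : Fin k → ℝ :=
  (Q j fun i => resp Q a ⟨i.1, i.isLt.trans j.isLt⟩).mulVec a
termination_by (j : ℕ)
decreasing_by exact i.isLt

/-- Responses of the algorithm under noisy linear measurements of `a`, with fresh
per-round noise `g`. -/
def nresp (Q : QueryMaps N k t) (a : Fin N → ℝ) (g : Fin t → Fin k → ℝ) (j : Fin t) :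
    Fin k → ℝ :=
  ((Q j fun i => nresp Q a g ⟨i.1, i.isLt.trans j.isLt⟩).mulVec a) + g j
termination_by (j : ℕ)
decreasing_by exact i.isLt

/-- The `tk × N` matrix stacking all the query matrices realized along the run of the
algorithm on input `a` (exact measurements). -/
def runMat (Q : QueryMaps N k t) (a : Fin N → ℝ) : Matrix (Fin t × Fin k) (Fin N) ℝ :=
  Matrix.of fun p l =>
    Q p.1 (fun i => resp Q a ⟨i.1, i.isLt.trans p.1.isLt⟩) p.2 l

end QueryMaps

/-- Kullback–Leibler divergence, valued in `[0, ∞]`, defined with the natural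
logarithm. -/
def klDiv {Ω : Type*} [MeasurableSpace Ω] (P Q : Measure Ω) : ℝ≥0∞ :=
  if P ≪ Q ∧ Integrable (fun x => Real.log ((P.rnDeriv Q x).toReal)) P then
    ENNReal.ofReal (∫ x, Real.log ((P.rnDeriv Q x).toReal) ∂P)
  else ⊤


/-- The rank-`r` plant `Σ_{i=1}^r uᵢ vᵢᵀ` built from the rows of `U` and `V`. -/
def plant {n r : ℕ} (U V : Fin r → Fin n → ℝ) : Matrix (Fin n) (Fin n) ℝ :=
  Matrix.of fun i j => ∑ l, U l i * V l j

/-- Schatten-`p` norm (real `p`), via the singular values. -/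
def schattenNorm {n : ℕ} (p : ℝ) (A : Matrix (Fin n) (Fin n) ℝ) : ℝ :=
  (∑ i ∈ Finset.range n, singVal A (i + 1) ^ p) ^ (1 / p)

/-- Ky-Fan `p` norm: sum of the `p` largest singular values. -/
def kyFanNorm {n : ℕ} (p : ℕ) (A : Matrix (Fin n) (Fin n) ℝ) : ℝ :=
  ∑ i ∈ Finset.range p, singVal A (i + 1)

section Measure

variable {α : Type*} [MeasurableSpace α]

lemma lintegral_pi_prod {ι : Type*} [Fintype ι] {Ω : ι → Type*} [∀ i, MeasurableSpace (Ω i)]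
    (μ : ∀ i, Measure (Ω i)) [∀ i, IsProbabilityMeasure (μ i)] {f : ∀ i, Ω i → ℝ≥0∞}
    (hf : ∀ i, Measurable (f i)) :
    ∫⁻ x, ∏ i, f i (x i) ∂Measure.pi μ = ∏ i, ∫⁻ y, f i y ∂μ i := by
  calc ∫⁻ x, ∏ i, f i (x i) ∂Measure.pi μ
      = ∏ i, ∫⁻ x : ∀ i, Ω i, f i (x i) ∂Measure.pi μ :=
        lintegral_prod_eq_prod_lintegral_of_indepFun Finset.univ (fun i (x : ∀ i, Ω i) => f i (x i))
          (iIndepFun_pi fun i => (hf i).aemeasurable) fun i => (hf i).comp (measurable_pi_apply i)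
    _ = ∏ i, ∫⁻ y, f i y ∂μ i := Finset.prod_congr rfl fun i _ =>
        (measurePreserving_eval μ i).lintegral_comp (hf i)

lemma pi_withDensity {ι : Type*} [Fintype ι] {Ω : ι → Type*} [∀ i, MeasurableSpace (Ω i)]
    (μ : ∀ i, Measure (Ω i)) [∀ i, IsProbabilityMeasure (μ i)] {f : ∀ i, Ω i → ℝ≥0∞}
    [∀ i, SigmaFinite ((μ i).withDensity (f i))] (hf : ∀ i, Measurable (f i)) :
    (Measure.pi fun i => (μ i).withDensity (f i))
      = (Measure.pi μ).withDensity fun (x : ∀ i, Ω i) => ∏ i, f i (x i) := by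
  refine Measure.pi_eq (μ := fun i => (μ i).withDensity (f i)) fun s hs => ?_
  have indicator_prod (x : ∀ i, Ω i) :
      (Set.univ.pi s).indicator (fun x => ∏ i, f i (x i)) x
        = ∏ i, (s i).indicator (f i) (x i) := by
    by_cases hx : x ∈ Set.univ.pi s
    · rw [Set.indicator_of_mem hx]
      exact Finset.prod_congr rfl fun i _ => (Set.indicator_of_mem (hx i trivial) (f i)).symm
    · obtain ⟨i, hi⟩ : ∃ i, x i ∉ s i := by simpa using hx
      rw [Set.indicator_of_notMem hx,
        Finset.prod_eq_zero (Finset.mem_univ i) (Set.indicator_of_notMem hi (f i))]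
  simp_rw [withDensity_apply _ (MeasurableSet.univ_pi hs),
    ← lintegral_indicator (MeasurableSet.univ_pi hs), indicator_prod,
    lintegral_pi_prod μ fun i => (hf i).indicator (hs i), lintegral_indicator (hs _),
    withDensity_apply _ (hs _)]

lemma measure_lt_le_exp_mul_lintegral (μ : Measure α) {X : α → ℝ} (hX : Measurable X) {θ : ℝ}
    (hθ : 0 ≤ θ) (T : ℝ) :
    μ {a | T < X a} ≤ ENNReal.ofReal (Real.exp (-(θ * T))) *
      ∫⁻ a, ENNReal.ofReal (Real.exp (θ * X a)) ∂μ := by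
  rw [← lintegral_const_mul _ (by fun_prop),
    ← lintegral_indicator_one (measurableSet_lt measurable_const hX)]
  refine lintegral_mono (Set.indicator_le fun a (ha : T < X a) => ?_)
  rw [← ENNReal.ofReal_mul (Real.exp_pos _).le, ← Real.exp_add, Pi.one_apply,
    ENNReal.one_le_ofReal, Real.one_le_exp_iff]
  linarith [mul_le_mul_of_nonneg_left ha.le hθ]

lemma setLIntegral_le_ofReal_exp (ν : Measure α) {l l₂ : α → ℝ≥0∞} (hl : Measurable l)
    {S : Set α} (hS : MeasurableSet S) {a b : ℝ}
    (hsq : ∀ x ∈ S, l x ^ 2 ≤ ENNReal.ofReal (Real.exp a) * l₂ x)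
    (hl₂ : ∫⁻ x, l₂ x ∂ν ≤ 1) (hνS : ν S ≤ ENNReal.ofReal (Real.exp b)) :
    ∫⁻ x in S, l x ∂ν ≤ ENNReal.ofReal (Real.exp ((a + b) / 2)) := by
  have second_moment : ∫⁻ x in S, l x ^ 2 ∂ν ≤ ENNReal.ofReal (Real.exp a) :=
    calc ∫⁻ x in S, l x ^ 2 ∂ν ≤ ∫⁻ x in S, ENNReal.ofReal (Real.exp a) * l₂ x ∂ν :=
          setLIntegral_mono' hS hsq
      _ = ENNReal.ofReal (Real.exp a) * ∫⁻ x in S, l₂ x ∂ν :=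
          lintegral_const_mul' _ _ ENNReal.ofReal_ne_top
      _ ≤ ENNReal.ofReal (Real.exp a) * 1 := by
          gcongr
          exact (setLIntegral_le_lintegral S l₂).trans hl₂
      _ = _ := mul_one _
  have sqrt_exp (x : ℝ) : ENNReal.ofReal (Real.exp x) ^ (1 / 2 : ℝ)
      = ENNReal.ofReal (Real.exp (x / 2)) := by
    rw [ENNReal.ofReal_rpow_of_pos (Real.exp_pos x), ← Real.exp_mul, mul_one_div]
  calc ∫⁻ x in S, l x ∂ν
      ≤ (∫⁻ x in S, l x ^ (2 : ℝ) ∂ν) ^ (1 / 2 : ℝ) * (ν S) ^ (1 / 2 : ℝ) := by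
        simpa using ENNReal.lintegral_mul_le_Lp_mul_Lq (ν.restrict S)
          Real.HolderConjugate.two_two hl.aemeasurable (aemeasurable_const (b := 1))
    _ ≤ ENNReal.ofReal (Real.exp a) ^ (1 / 2 : ℝ)
          * ENNReal.ofReal (Real.exp b) ^ (1 / 2 : ℝ) := by
        simp only [ENNReal.rpow_two]
        gcongr
    _ = ENNReal.ofReal (Real.exp ((a + b) / 2)) := by
        rw [sqrt_exp, sqrt_exp, ← ENNReal.ofReal_mul (Real.exp_pos _).le, ← Real.exp_add, add_div]

end Measure

section Measurability

variable {ι κ : Type*} [Fintype ι]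

lemma measurable_mulVec {α : Type*} [MeasurableSpace α] {M : α → Matrix κ ι ℝ} {v : α → ι → ℝ}
    (hM : ∀ i j, Measurable fun a => M a i j) (hv : Measurable v) :
    Measurable fun a => M a *ᵥ v a := by
  refine measurable_pi_iff.2 fun i => ?_
  simp only [mulVec, dotProduct]
  exact Finset.measurable_sum _ fun j _ => (hM i j).mul ((measurable_pi_apply j).comp hv)

@[fun_prop]
lemma measurable_const_mulVec (A : Matrix κ ι ℝ) : Measurable fun x : ι → ℝ => A *ᵥ x :=
  measurable_mulVec (fun _ _ => measurable_const) measurable_id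

@[fun_prop]
lemma measurable_sqNorm : Measurable (sqNorm : (ι → ℝ) → ℝ) := by
  unfold sqNorm; fun_prop

end Measurability

section EuclideanNorm

variable {ι κ : Type*} [Fintype ι] [Fintype κ]

lemma sqNorm_eq_dotProduct (x : ι → ℝ) : sqNorm x = x ⬝ᵥ x := by
  simp only [sqNorm, dotProduct, sq]

lemma sqNorm_nonneg (x : ι → ℝ) : 0 ≤ sqNorm x := Finset.sum_nonneg fun _ _ => sq_nonneg _

lemma sqNorm_single_one [DecidableEq ι] (i : ι) : sqNorm (Pi.single i 1 : ι → ℝ) = 1 := by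
  simp [sqNorm_eq_dotProduct]

lemma sqNorm_smul (c : ℝ) (x : ι → ℝ) : sqNorm (c • x) = c ^ 2 * sqNorm x := by
  simp [sqNorm, mul_pow, Finset.mul_sum]

lemma sqNorm_mulVec_eq (A : Matrix κ ι ℝ) (x : ι → ℝ) :
    sqNorm (A *ᵥ x) = x ⬝ᵥ (Aᵀ * A) *ᵥ x := by
  rw [sqNorm_eq_dotProduct, ← mulVec_mulVec, dotProduct_mulVec x, vecMul_transpose]

lemma sqNorm_transpose_mulVec [DecidableEq κ] {A : Matrix κ ι ℝ} (hA : A * Aᵀ = 1) (w : κ → ℝ) :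
    sqNorm (Aᵀ *ᵥ w) = sqNorm w := by
  rw [sqNorm_mulVec_eq, transpose_transpose, hA, one_mulVec, sqNorm_eq_dotProduct]

lemma sqNorm_mulVec_le [DecidableEq κ] {A : Matrix κ ι ℝ} (hA : A * Aᵀ = 1) (x : ι → ℝ) :
    sqNorm (A *ᵥ x) ≤ sqNorm x := by
  have cross : x ⬝ᵥ Aᵀ *ᵥ (A *ᵥ x) = sqNorm (A *ᵥ x) := by
    rw [mulVec_mulVec, sqNorm_mulVec_eq]
  have pythagoras : sqNorm (x - Aᵀ *ᵥ (A *ᵥ x)) = sqNorm x - sqNorm (A *ᵥ x) := by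
    rw [sqNorm_eq_dotProduct, sub_dotProduct, dotProduct_sub, dotProduct_sub,
      dotProduct_comm (Aᵀ *ᵥ _) x, cross, ← sqNorm_eq_dotProduct, ← sqNorm_eq_dotProduct,
      sqNorm_transpose_mulVec hA]
    ring
  linarith [sqNorm_nonneg (x - Aᵀ *ᵥ (A *ᵥ x))]

lemma frobSq_eq_trace (A : Matrix κ ι ℝ) : frobSq A = (Aᵀ * A).trace := by
  simp only [frobSq, trace, diag, mul_apply, transpose_apply, ← sq]
  exact Finset.sum_comm

lemma frobSq_of_mul_transpose_eq_one [DecidableEq κ] {A : Matrix κ ι ℝ} (hA : A * Aᵀ = 1) :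
    frobSq A = Fintype.card κ := by
  rw [frobSq_eq_trace, trace_mul_comm, hA, trace_one]

end EuclideanNorm

section Gaussian

variable {ι κ : Type*} [Fintype ι] [Fintype κ]

instance isProbabilityMeasure_stdGaussian (ι : Type*) [Fintype ι] :
    IsProbabilityMeasure (_root_.stdGaussian ι) := by
  unfold _root_.stdGaussian; infer_instance

lemma integral_cexp_dotProduct_stdGaussian (ξ : ι → ℝ) :
    ∫ x, Complex.exp ((ξ ⬝ᵥ x : ℝ) * Complex.I) ∂stdGaussian ι
      = Complex.exp (-(sqNorm ξ / 2 : ℝ)) := by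
  have factor (x : ι → ℝ) : Complex.exp ((ξ ⬝ᵥ x : ℝ) * Complex.I)
      = ∏ i, Complex.exp (ξ i * x i * Complex.I) := by
    rw [← Complex.exp_sum, ← Finset.sum_mul]
    simp only [dotProduct, Complex.ofReal_sum, Complex.ofReal_mul]
  simp_rw [factor, _root_.stdGaussian]
  rw [integral_fintype_prod_eq_prod fun i (x : ℝ) => Complex.exp (ξ i * x * Complex.I)]
  simp_rw [← charFun_apply_real, charFun_gaussianReal, ← Complex.exp_sum]
  simp [sqNorm, Finset.sum_div]

lemma stdGaussian_map_mulVec [DecidableEq κ] {A : Matrix κ ι ℝ} (hA : A * Aᵀ = 1) :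
    (stdGaussian ι).map (A *ᵥ ·) = stdGaussian κ := by
  refine Measure.ext_of_charFunDual (funext fun L => ?_)
  obtain ⟨ξ, hξ⟩ : ∃ ξ : κ → ℝ, ∀ w, L w = ξ ⬝ᵥ w :=
    ⟨fun i => L fun j => if i = j then 1 else 0, fun w => by
      simpa [dotProduct, mul_comm] using LinearMap.pi_apply_eq_sum_univ L.toLinearMap w⟩
  rw [charFunDual_apply, charFunDual_apply,
    integral_map (measurable_const_mulVec A).aemeasurable (by fun_prop)]
  simp_rw [hξ, dotProduct_mulVec, ← mulVec_transpose,
    integral_cexp_dotProduct_stdGaussian, sqNorm_transpose_mulVec hA]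

/-- The density at `w` of the Gaussian vector with mean `c` and identity covariance, relative to
the standard Gaussian measure. -/
def gaussianShiftDensity (c w : ι → ℝ) : ℝ≥0∞ :=
  ENNReal.ofReal (Real.exp (c ⬝ᵥ w - sqNorm c / 2))

lemma gaussianShiftDensity_eq_prod (c w : ι → ℝ) :
    gaussianShiftDensity c w
      = ∏ i, ENNReal.ofReal (Real.exp (c i * w i - c i ^ 2 / 2)) := by
  rw [← ENNReal.ofReal_prod_of_nonneg fun i _ => (Real.exp_pos _).le, ← Real.exp_sum]
  simp only [gaussianShiftDensity, dotProduct, sqNorm, Finset.sum_sub_distrib, Finset.sum_div]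

lemma gaussianShiftDensity_sq (c w : ι → ℝ) :
    gaussianShiftDensity c w ^ 2
      = ENNReal.ofReal (Real.exp (sqNorm c)) * gaussianShiftDensity ((2 : ℝ) • c) w := by
  rw [gaussianShiftDensity, gaussianShiftDensity, ← ENNReal.ofReal_pow (Real.exp_pos _).le,
    ← ENNReal.ofReal_mul (Real.exp_pos _).le, ← Real.exp_nat_mul, ← Real.exp_add, sqNorm_smul,
    smul_dotProduct, smul_eq_mul]
  congr 2
  push_cast
  ring

lemma measurable_gaussianShiftDensity {α : Type*} [MeasurableSpace α] {c w : α → ι → ℝ}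
    (hc : Measurable c) (hw : Measurable w) :
    Measurable fun a => gaussianShiftDensity (c a) (w a) := by
  simp only [gaussianShiftDensity, dotProduct]
  fun_prop

lemma gaussianReal_eq_withDensity (c : ℝ) :
    gaussianReal c 1 = (gaussianReal 0 1).withDensity
      fun x => ENNReal.ofReal (Real.exp (c * x - c ^ 2 / 2)) := by
  rw [gaussianReal_of_var_ne_zero c one_ne_zero, gaussianReal_of_var_ne_zero 0 one_ne_zero,
    ← withDensity_mul _ (measurable_gaussianPDF 0 1) (by fun_prop)]
  congr 1
  ext x
  rw [Pi.mul_apply, gaussianPDF, gaussianPDF, ← ENNReal.ofReal_mul (gaussianPDFReal_nonneg _ _ _),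
    gaussianPDFReal, gaussianPDFReal, mul_assoc _ (Real.exp _), ← Real.exp_add, NNReal.coe_one]
  ring_nf

lemma stdGaussian_map_add_const (c : ι → ℝ) :
    (stdGaussian ι).map (· + c) = (stdGaussian ι).withDensity (gaussianShiftDensity c) := by
  have : ∀ i, SigmaFinite ((gaussianReal 0 1).withDensity
      fun x => ENNReal.ofReal (Real.exp (c i * x - c i ^ 2 / 2))) := fun i => by
    rw [← gaussianReal_eq_withDensity]; infer_instance
  calc (stdGaussian ι).map (· + c)
      = Measure.pi fun i => gaussianReal (c i) 1 := by
        have shift (i : ι) : (gaussianReal 0 1).map (· + c i) = gaussianReal (c i) 1 := by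
          rw [gaussianReal_map_add_const, zero_add]
        simp_rw [← shift]
        exact Measure.pi_map_pi (μ := fun _ => gaussianReal 0 1) (f := fun i y => y + c i)
          fun i => by fun_prop
    _ = (stdGaussian ι).withDensity (gaussianShiftDensity c) := by
        rw [funext fun i => gaussianReal_eq_withDensity (c i),
          pi_withDensity _ fun i => by fun_prop]
        simp_rw [← gaussianShiftDensity_eq_prod]
        rfl

lemma lintegral_stdGaussian_eq_lintegral_resample [DecidableEq κ] {A : Matrix κ ι ℝ}
    (hA : A * Aᵀ = 1) {f : (ι → ℝ) → ℝ≥0∞} (hf : Measurable f) :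
    ∫⁻ y, f y ∂stdGaussian ι
      = ∫⁻ y, ∫⁻ g, f (y + Aᵀ *ᵥ (g - A *ᵥ y)) ∂stdGaussian κ ∂stdGaussian ι := by
  set M : Matrix ι (ι ⊕ κ) ℝ := fromCols (1 - Aᵀ * A) Aᵀ
  have hM : M * Mᵀ = 1 := by
    have idempotent : Aᵀ * A * (Aᵀ * A) = Aᵀ * A := by
      rw [Matrix.mul_assoc, ← Matrix.mul_assoc A, hA, Matrix.one_mul]
    simp only [M, transpose_fromCols, fromCols_mul_fromRows, transpose_sub, transpose_one,
      transpose_mul, transpose_transpose, Matrix.mul_sub, Matrix.sub_mul, idempotent,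
      Matrix.mul_one, Matrix.one_mul]
    abel
  have mulVec_sumElim (y : ι → ℝ) (g : κ → ℝ) :
      M *ᵥ Sum.elim y g = y + Aᵀ *ᵥ (g - A *ᵥ y) := by
    simp only [M, fromCols_mulVec, Sum.elim_comp_inl, Sum.elim_comp_inr, sub_mulVec, one_mulVec,
      mulVec_sub, mulVec_mulVec]
    abel
  have hfM : Measurable fun a => f (M *ᵥ a) := hf.comp (measurable_const_mulVec M)
  have split := measurePreserving_sumPiEquivProdPi_symm fun _ : ι ⊕ κ => gaussianReal 0 1
  have apply_split (y : ι → ℝ) (g : κ → ℝ) :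
      (MeasurableEquiv.sumPiEquivProdPi fun _ : ι ⊕ κ => ℝ).symm (y, g) = Sum.elim y g := by
    ext i; cases i <;> rfl
  calc ∫⁻ y, f y ∂stdGaussian ι = ∫⁻ a, f (M *ᵥ a) ∂stdGaussian (ι ⊕ κ) := by
        rw [← stdGaussian_map_mulVec hM, lintegral_map hf (measurable_const_mulVec M)]
    _ = _ := (split.lintegral_comp hfM).symm
    _ = _ := by
        refine (lintegral_prod _ (hfM.comp (MeasurableEquiv.measurable _)).aemeasurable).trans ?_
        simp only [Function.comp_apply, apply_split, mulVec_sumElim]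
        rfl

/-- Disintegration of the shifted Gaussian vector `y + x` along its measurement `w` by `A`. -/
lemma lintegral_stdGaussian_add_eq [DecidableEq κ] {A : Matrix κ ι ℝ} (hA : A * Aᵀ = 1)
    (x : ι → ℝ) {f : (ι → ℝ) → ℝ≥0∞} (hf : Measurable f) :
    ∫⁻ y, f (y + x) ∂stdGaussian ι
      = ∫⁻ w, gaussianShiftDensity (A *ᵥ x) w *
          ∫⁻ y, f (y + x + Aᵀ *ᵥ (w - A *ᵥ (y + x))) ∂stdGaussian ι ∂stdGaussian κ := by
  have hfw : Measurable fun p : (κ → ℝ) × (ι → ℝ) =>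
      f (p.2 + x + Aᵀ *ᵥ (p.1 - A *ᵥ (p.2 + x))) := by fun_prop
  have recenter (y : ι → ℝ) (g : κ → ℝ) : y + Aᵀ *ᵥ (g - A *ᵥ y) + x
      = y + x + Aᵀ *ᵥ (g + A *ᵥ x - A *ᵥ (y + x)) := by
    rw [mulVec_add A]; abel_nf
  calc ∫⁻ y, f (y + x) ∂stdGaussian ι
      = ∫⁻ y, ∫⁻ g, f (y + Aᵀ *ᵥ (g - A *ᵥ y) + x) ∂stdGaussian κ ∂stdGaussian ι :=
        lintegral_stdGaussian_eq_lintegral_resample hA (f := fun y => f (y + x)) (by fun_prop)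
    _ = ∫⁻ g, ∫⁻ y, f (y + x + Aᵀ *ᵥ (g + A *ᵥ x - A *ᵥ (y + x))) ∂stdGaussian ι
          ∂stdGaussian κ := by
        simp_rw [recenter]
        exact lintegral_lintegral_swap (by fun_prop)
    _ = ∫⁻ w, ∫⁻ y, f (y + x + Aᵀ *ᵥ (w - A *ᵥ (y + x))) ∂stdGaussian ι
          ∂(stdGaussian κ).map (· + A *ᵥ x) :=
        (lintegral_map hfw.lintegral_prod_right' (by fun_prop)).symm
    _ = _ := by
        rw [stdGaussian_map_add_const]
        exact lintegral_withDensity_eq_lintegral_mul _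
          (measurable_gaussianShiftDensity measurable_const measurable_id)
          hfw.lintegral_prod_right'

end Gaussian

section QuadraticForm

variable {ι κ : Type*} [Fintype ι] [Fintype κ]

lemma lintegral_exp_mul_sq_gaussianReal {d : ℝ} (hd : d < 1 / 2) :
    ∫⁻ x, ENNReal.ofReal (Real.exp (d * x ^ 2)) ∂gaussianReal 0 1
      = ENNReal.ofReal (Real.sqrt (1 - 2 * d))⁻¹ := by
  have pos : 0 < 1 - 2 * d := by linarith
  set v : NNReal := ⟨(1 - 2 * d)⁻¹, by positivity⟩
  have coe_v : (v : ℝ) = (1 - 2 * d)⁻¹ := rfl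
  have v_ne_zero : v ≠ 0 := NNReal.coe_ne_zero.1 (coe_v ▸ inv_ne_zero pos.ne')
  have density (x : ℝ) : gaussianPDF 0 1 x * ENNReal.ofReal (Real.exp (d * x ^ 2))
      = ENNReal.ofReal (Real.sqrt (1 - 2 * d))⁻¹ * gaussianPDF 0 v x := by
    rw [gaussianPDF, gaussianPDF, ← ENNReal.ofReal_mul (gaussianPDFReal_nonneg _ _ _),
      ← ENNReal.ofReal_mul (by positivity), gaussianPDFReal, gaussianPDFReal, coe_v,
      NNReal.coe_one, mul_assoc, ← Real.exp_add, ← mul_assoc,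
      Real.sqrt_mul (by positivity) (1 - 2 * d)⁻¹, Real.sqrt_inv]
    congr 2
    · field_simp
    · field_simp
      ring_nf
  rw [gaussianReal_of_var_ne_zero 0 one_ne_zero, lintegral_withDensity_eq_lintegral_mul _
    (measurable_gaussianPDF 0 1) (by fun_prop)]
  simp_rw [Pi.mul_apply, density]
  rw [lintegral_const_mul _ (measurable_gaussianPDF 0 v), lintegral_gaussianPDF_eq_one 0 v_ne_zero,
    mul_one]

lemma lintegral_exp_mul_sq_gaussianReal_le {d : ℝ} (h0 : 0 ≤ d) (h1 : d ≤ 1 / 4) :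
    ∫⁻ x, ENNReal.ofReal (Real.exp (d * x ^ 2)) ∂gaussianReal 0 1
      ≤ ENNReal.ofReal (Real.exp (2 * d)) := by
  rw [lintegral_exp_mul_sq_gaussianReal (by linarith)]
  refine ENNReal.ofReal_le_ofReal (inv_le_of_inv_le₀ (Real.exp_pos _) (Real.le_sqrt_of_sq_le ?_))
  calc (Real.exp (2 * d))⁻¹ ^ 2 = (Real.exp (4 * d))⁻¹ := by
        rw [inv_pow, ← Real.exp_nat_mul]; ring_nf
    _ ≤ (1 + 4 * d)⁻¹ := inv_anti₀ (by linarith) (by linarith [Real.add_one_le_exp (4 * d)])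
    _ ≤ 1 - 2 * d := by
        rw [inv_le_iff_one_le_mul₀ (by linarith)]
        nlinarith

lemma exists_orthogonal_diagonalization (B : Matrix κ ι ℝ) :
    ∃ (U : Matrix ι ι ℝ) (d : ι → ℝ), U * Uᵀ = 1 ∧ frobSq B = ∑ i, d i ∧
      ∀ x, sqNorm (B *ᵥ x) = ∑ i, d i * (U *ᵥ x) i ^ 2 := by
  have hH : (Bᵀ * B).IsHermitian := by
    simpa using (posSemidef_conjTranspose_mul_self B).1
  set V : Matrix ι ι ℝ := hH.eigenvectorUnitary.1
  have hVV : Vᵀ * Vᵀᵀ = 1 := by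
    simpa [star_eq_conjTranspose] using Unitary.coe_star_mul_self hH.eigenvectorUnitary
  have spectral : Bᵀ * B = V * diagonal hH.eigenvalues * Vᵀ := by
    simpa [Unitary.conjStarAlgAut_apply, star_eq_conjTranspose] using hH.spectral_theorem
  refine ⟨Vᵀ, hH.eigenvalues, hVV, ?_, fun x => ?_⟩
  · rw [frobSq_eq_trace]
    simpa using hH.trace_eq_sum_eigenvalues
  · calc sqNorm (B *ᵥ x) = x ⬝ᵥ (V * diagonal hH.eigenvalues * Vᵀ) *ᵥ x := by
          rw [sqNorm_mulVec_eq, ← spectral]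
      _ = Vᵀ *ᵥ x ⬝ᵥ diagonal hH.eigenvalues *ᵥ Vᵀ *ᵥ x := by
          rw [← mulVec_mulVec, ← mulVec_mulVec, dotProduct_mulVec, ← mulVec_transpose]
      _ = ∑ i, hH.eigenvalues i * (Vᵀ *ᵥ x) i ^ 2 := by
          simp only [dotProduct, mulVec_diagonal]
          exact Finset.sum_congr rfl fun i _ => by ring

lemma lintegral_exp_sqNorm_mulVec_le {B : Matrix κ ι ℝ} {θ b : ℝ} (hθ : 0 ≤ θ)
    (hB : ∀ x, sqNorm (B *ᵥ x) ≤ b * sqNorm x) (hθb : θ * b ≤ 1 / 4) :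
    ∫⁻ x, ENNReal.ofReal (Real.exp (θ * sqNorm (B *ᵥ x))) ∂stdGaussian ι
      ≤ ENNReal.ofReal (Real.exp (2 * θ * frobSq B)) := by
  obtain ⟨U, d, hU, trace_eq, quad_eq⟩ := exists_orthogonal_diagonalization B
  have sqNorm_column (i : ι) : sqNorm (B *ᵥ (Uᵀ *ᵥ Pi.single i 1)) = d i := by
    rw [quad_eq, mulVec_mulVec, hU, one_mulVec]
    simp [Pi.single_apply]
  have d_nonneg (i : ι) : 0 ≤ d i := sqNorm_column i ▸ sqNorm_nonneg _
  have d_le (i : ι) : d i ≤ b := by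
    simpa only [sqNorm_column, sqNorm_transpose_mulVec hU, sqNorm_single_one, mul_one]
      using hB (Uᵀ *ᵥ Pi.single i 1)
  have exp_sum (a : ι → ℝ) : ENNReal.ofReal (Real.exp (∑ i, a i))
      = ∏ i, ENNReal.ofReal (Real.exp (a i)) := by
    rw [Real.exp_sum, ENNReal.ofReal_prod_of_nonneg fun i _ => (Real.exp_pos _).le]
  calc ∫⁻ x, ENNReal.ofReal (Real.exp (θ * sqNorm (B *ᵥ x))) ∂stdGaussian ι
      = ∫⁻ y, ENNReal.ofReal (Real.exp (∑ i, θ * d i * y i ^ 2)) ∂stdGaussian ι := by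
        conv_rhs => rw [← stdGaussian_map_mulVec hU]
        rw [lintegral_map (by fun_prop) (by fun_prop)]
        simp_rw [quad_eq, Finset.mul_sum, mul_assoc]
    _ = ∏ i, ∫⁻ y, ENNReal.ofReal (Real.exp (θ * d i * y ^ 2)) ∂gaussianReal 0 1 := by
        simp_rw [exp_sum]
        exact lintegral_pi_prod (fun _ => gaussianReal 0 1)
          (f := fun i y => ENNReal.ofReal (Real.exp (θ * d i * y ^ 2))) fun i => by fun_prop
    _ ≤ ∏ i, ENNReal.ofReal (Real.exp (2 * (θ * d i))) :=
        Finset.prod_le_prod' fun i _ => lintegral_exp_mul_sq_gaussianReal_le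
          (mul_nonneg hθ (d_nonneg i)) ((mul_le_mul_of_nonneg_left (d_le i) hθ).trans hθb)
    _ = ENNReal.ofReal (Real.exp (2 * θ * frobSq B)) := by
        rw [← exp_sum, trace_eq, ← Finset.mul_sum, ← Finset.mul_sum, mul_assoc]

lemma stdGaussian_six_mul_card_lt_sqNorm_le :
    stdGaussian ι {u | 6 * Fintype.card ι < sqNorm u}
      ≤ ENNReal.ofReal (Real.exp (-Fintype.card ι)) := by
  have moment : ∫⁻ u, ENNReal.ofReal (Real.exp (1 / 4 * sqNorm u)) ∂stdGaussian ι
      ≤ ENNReal.ofReal (Real.exp (2 * (1 / 4) * Fintype.card ι)) := by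
    simpa [frobSq_of_mul_transpose_eq_one (A := (1 : Matrix ι ι ℝ)) (by simp)] using
      lintegral_exp_sqNorm_mulVec_le (B := (1 : Matrix ι ι ℝ)) (θ := 1 / 4) (b := 1)
        (by norm_num) (by simp) (by norm_num)
  refine (measure_lt_le_exp_mul_lintegral _ measurable_sqNorm (θ := 1 / 4) (by norm_num) _).trans
    ((mul_le_mul_right moment _).trans_eq ?_)
  rw [← ENNReal.ofReal_mul (Real.exp_pos _).le, ← Real.exp_add]
  ring_nf

end QuadraticForm

section Plant

variable {κ : Type*} {n : ℕ}

lemma sum_finProdFinEquiv (f : Fin (n * n) → ℝ) :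
    ∑ p, f p = ∑ i, ∑ j, f (finProdFinEquiv (i, j)) := by
  rw [← Fintype.sum_prod_type' fun i j => f (finProdFinEquiv (i, j))]
  exact (Equiv.sum_comp finProdFinEquiv f).symm

lemma tensor_finProdFinEquiv (u v : Fin n → ℝ) (i j : Fin n) :
    tensor u v (finProdFinEquiv (i, j)) = u i * v j := by
  simp only [tensor, _root_.vec, Equiv.symm_apply_apply, of_apply]

lemma sqNorm_tensor (u v : Fin n → ℝ) : sqNorm (tensor u v) = sqNorm u * sqNorm v := by
  simp only [sqNorm, sum_finProdFinEquiv, tensor_finProdFinEquiv, Finset.sum_mul_sum, mul_pow]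

lemma measurable_tensor : Measurable fun p : (Fin n → ℝ) × (Fin n → ℝ) => tensor p.1 p.2 := by
  refine measurable_pi_iff.2 fun i => ?_
  simp only [tensor, _root_.vec, of_apply]
  fun_prop

/-- The matrix of the linear map `v ↦ R (u ⊗ v)`. -/
def tensorContraction (R : Matrix κ (Fin (n * n)) ℝ) (u : Fin n → ℝ) : Matrix κ (Fin n) ℝ :=
  of fun l j => ∑ i, R l (finProdFinEquiv (i, j)) * u i

/-- The matrix of the linear map `u ↦ tensorContraction R u`, with the entries of the contraction
indexed by `κ × Fin n`. -/
def tensorUnfolding (R : Matrix κ (Fin (n * n)) ℝ) : Matrix (κ × Fin n) (Fin n) ℝ :=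
  of fun p i => R p.1 (finProdFinEquiv (i, p.2))

lemma tensorContraction_mulVec (R : Matrix κ (Fin (n * n)) ℝ) (u v : Fin n → ℝ) :
    tensorContraction R u *ᵥ v = R *ᵥ tensor u v := by
  ext l
  simp only [mulVec, dotProduct, tensorContraction, of_apply, sum_finProdFinEquiv,
    tensor_finProdFinEquiv, Finset.sum_mul, mul_assoc]
  exact Finset.sum_comm

variable [Fintype κ]

lemma frobSq_tensorContraction (R : Matrix κ (Fin (n * n)) ℝ) (u : Fin n → ℝ) :
    frobSq (tensorContraction R u) = sqNorm (tensorUnfolding R *ᵥ u) := by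
  rw [sqNorm, Fintype.sum_prod_type]
  rfl

lemma frobSq_tensorUnfolding (R : Matrix κ (Fin (n * n)) ℝ) :
    frobSq (tensorUnfolding R) = frobSq R := by
  simp only [frobSq, Fintype.sum_prod_type, tensorUnfolding, of_apply, sum_finProdFinEquiv]
  exact Finset.sum_congr rfl fun l _ => Finset.sum_comm

variable [DecidableEq κ] {R : Matrix κ (Fin (n * n)) ℝ}

lemma sqNorm_tensorContraction_mulVec_le (hR : R * Rᵀ = 1) (u v : Fin n → ℝ) :
    sqNorm (tensorContraction R u *ᵥ v) ≤ sqNorm u * sqNorm v := by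
  rw [tensorContraction_mulVec, ← sqNorm_tensor]
  exact sqNorm_mulVec_le hR _

lemma sqNorm_tensorUnfolding_mulVec_le (hR : R * Rᵀ = 1) (u : Fin n → ℝ) :
    sqNorm (tensorUnfolding R *ᵥ u) ≤ n * sqNorm u := by
  have columns : frobSq (tensorContraction R u)
      = ∑ j, sqNorm (tensorContraction R u *ᵥ Pi.single j 1) := by
    simp only [frobSq, sqNorm, mulVec_single_one, col_apply]
    exact Finset.sum_comm
  calc sqNorm (tensorUnfolding R *ᵥ u)
      = ∑ j, sqNorm (tensorContraction R u *ᵥ Pi.single j 1) := by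
        rw [← frobSq_tensorContraction, columns]
    _ ≤ ∑ _j : Fin n, sqNorm u := Finset.sum_le_sum fun j _ => by
        simpa only [sqNorm_single_one, mul_one] using
          sqNorm_tensorContraction_mulVec_le hR u (Pi.single j 1)
    _ = n * sqNorm u := by simp

/-- The law of `u ⊗ v` for independent standard Gaussian `u` and `v`, restricted to the event
`‖u‖² ≤ 6 n`. Without the restriction `‖R (u ⊗ v)‖²` would not have exponential tails at
scale `n`. -/
def truncatedPlant (n : ℕ) : Measure (Fin (n * n) → ℝ) :=
  (((stdGaussian (Fin n)).restrict {u | sqNorm u ≤ 6 * n}).prod (stdGaussian (Fin n))).map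
    fun p => tensor p.1 p.2

lemma truncatedPlant_univ_le (n : ℕ) : truncatedPlant n Set.univ ≤ 1 := by
  rw [truncatedPlant, Measure.map_apply measurable_tensor MeasurableSet.univ, Set.preimage_univ,
    Measure.prod_apply MeasurableSet.univ]
  simpa using prob_le_one (μ := stdGaussian (Fin n))

lemma lintegral_exp_truncatedPlant_le (hR : R * Rᵀ = 1) {θ : ℝ} (hθ : 0 ≤ θ)
    (hθn : θ * (6 * n) ≤ 1 / 4) :
    ∫⁻ x, ENNReal.ofReal (Real.exp (θ * sqNorm (R *ᵥ x))) ∂truncatedPlant n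
      ≤ ENNReal.ofReal (Real.exp (4 * θ * Fintype.card κ)) := by
  have exp_meas : Measurable fun p : (Fin n → ℝ) × (Fin n → ℝ) =>
      ENNReal.ofReal (Real.exp (θ * sqNorm (R *ᵥ tensor p.1 p.2))) :=
    (by fun_prop : Measurable fun x : Fin (n * n) → ℝ =>
      ENNReal.ofReal (Real.exp (θ * sqNorm (R *ᵥ x)))).comp measurable_tensor
  have bound_given_u (u : Fin n → ℝ) (hu : sqNorm u ≤ 6 * n) :
      ∫⁻ v, ENNReal.ofReal (Real.exp (θ * sqNorm (R *ᵥ tensor u v))) ∂stdGaussian (Fin n)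
        ≤ ENNReal.ofReal (Real.exp (2 * θ * sqNorm (tensorUnfolding R *ᵥ u))) := by
    simp only [← tensorContraction_mulVec, ← frobSq_tensorContraction]
    exact lintegral_exp_sqNorm_mulVec_le hθ (fun v =>
      (sqNorm_tensorContraction_mulVec_le hR u v).trans
        (mul_le_mul_of_nonneg_right hu (sqNorm_nonneg v))) hθn
  calc ∫⁻ x, ENNReal.ofReal (Real.exp (θ * sqNorm (R *ᵥ x))) ∂truncatedPlant n
      = ∫⁻ u in {u | sqNorm u ≤ 6 * n}, ∫⁻ v,
          ENNReal.ofReal (Real.exp (θ * sqNorm (R *ᵥ tensor u v)))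
          ∂stdGaussian (Fin n) ∂stdGaussian (Fin n) := by
        rw [truncatedPlant, lintegral_map (by fun_prop) measurable_tensor,
          lintegral_prod _ exp_meas.aemeasurable]
    _ ≤ ∫⁻ u in {u | sqNorm u ≤ 6 * n},
          ENNReal.ofReal (Real.exp (2 * θ * sqNorm (tensorUnfolding R *ᵥ u)))
          ∂stdGaussian (Fin n) :=
        setLIntegral_mono' (measurableSet_le measurable_sqNorm measurable_const) bound_given_u
    _ ≤ ∫⁻ u, ENNReal.ofReal (Real.exp (2 * θ * sqNorm (tensorUnfolding R *ᵥ u)))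
          ∂stdGaussian (Fin n) := setLIntegral_le_lintegral _ _
    _ ≤ ENNReal.ofReal (Real.exp (2 * (2 * θ) * frobSq (tensorUnfolding R))) :=
        lintegral_exp_sqNorm_mulVec_le (by positivity) (sqNorm_tensorUnfolding_mulVec_le hR)
          (by nlinarith [mul_nonneg hθ n.cast_nonneg])
    _ = ENNReal.ofReal (Real.exp (4 * θ * Fintype.card κ)) := by
        rw [frobSq_tensorUnfolding, frobSq_of_mul_transpose_eq_one hR]
        ring_nf

lemma truncatedPlant_lt_sqNorm_mulVec_le (hn : 0 < n) (hR : R * Rᵀ = 1) (T : ℝ) :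
    truncatedPlant n {x | T < sqNorm (R *ᵥ x)}
      ≤ ENNReal.ofReal (Real.exp ((4 * Fintype.card κ - T) / (24 * n))) := by
  have moment := lintegral_exp_truncatedPlant_le hR (θ := 1 / (24 * n)) (by positivity)
    (by field_simp; norm_num)
  refine (measure_lt_le_exp_mul_lintegral _ (by fun_prop) (by positivity) T).trans
    ((mul_le_mul_right moment _).trans_eq ?_)
  rw [← ENNReal.ofReal_mul (Real.exp_pos _).le, ← Real.exp_add]
  ring_nf

end Plant

lemma measurable_finCons {α : Type*} [MeasurableSpace α] {t : ℕ} (w : α) :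
    Measurable fun h : Fin t → α => (Fin.cons w h : Fin (t + 1) → α) :=
  measurable_pi_iff.2 fun i => Fin.cases measurable_const (fun i => measurable_pi_apply i) i

/-- The law of `t` independent standard Gaussian responses in `ℝᵏ`. -/
def gaussianResponses (k t : ℕ) : Measure (Fin t → Fin k → ℝ) :=
  Measure.pi fun _ => stdGaussian (Fin k)

instance isProbabilityMeasure_gaussianResponses (k t : ℕ) :
    IsProbabilityMeasure (gaussianResponses k t) := by
  unfold gaussianResponses; infer_instance

lemma lintegral_gaussianResponses_succ {k t : ℕ} {F : (Fin (t + 1) → Fin k → ℝ) → ℝ≥0∞}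
    (hF : Measurable F) :
    ∫⁻ h, F h ∂gaussianResponses k (t + 1)
      = ∫⁻ w, ∫⁻ h, F (Fin.cons w h) ∂gaussianResponses k t ∂stdGaussian (Fin k) := by
  have split := (measurePreserving_piFinSuccAbove
    (fun _ : Fin (t + 1) => stdGaussian (Fin k)) 0).symm
  refine (split.lintegral_comp hF).symm.trans ?_
  refine (lintegral_prod _ (hF.comp (MeasurableEquiv.measurable _)).aemeasurable).trans ?_
  simp only [Function.comp_apply, MeasurableEquiv.piFinSuccAbove_symm_apply,
    Fin.insertNthEquiv_zero]
  rfl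

namespace QueryMaps

variable {N k t : ℕ}

/-- The query matrix of round `i` when the responses are `h`. Only the responses of the rounds
before `i` matter. -/
def queryAt (Q : QueryMaps N k t) (h : Fin t → Fin k → ℝ) (i : Fin t) :
    Matrix (Fin k) (Fin N) ℝ :=
  Q i fun l => h ⟨l, l.isLt.trans i.isLt⟩

/-- The query matrices of all rounds when the responses are `h`, stacked on top of each other. -/
def stack (Q : QueryMaps N k t) (h : Fin t → Fin k → ℝ) : Matrix (Fin t × Fin k) (Fin N) ℝ :=
  of fun p l => queryAt Q h p.1 p.2 l

/-- The algorithm consisting of the first `t` of `t + 1` rounds. -/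
def init (Q : QueryMaps N k (t + 1)) : QueryMaps N k t :=
  fun j h => Q j.castSucc h

/-- The algorithm that remains to be run once the first of `t + 1` rounds has been answered
by `r`. -/
def tail (Q : QueryMaps N k (t + 1)) (r : Fin k → ℝ) : QueryMaps N k t :=
  fun j h => Q j.succ (Fin.cons r h)

/-- The density at `h`, relative to independent standard Gaussian responses, of the responses of
`Q` to the input `y + x` with `y` standard Gaussian. -/
def likelihood (Q : QueryMaps N k t) (x : Fin N → ℝ) (h : Fin t → Fin k → ℝ) : ℝ≥0∞ :=
  ∏ i, gaussianShiftDensity (queryAt Q h i *ᵥ x) (h i)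

lemma runMat_eq_stack (Q : QueryMaps N k t) (a : Fin N → ℝ) :
    runMat Q a = stack Q (resp Q a) := rfl

lemma sqNorm_stack_mulVec (Q : QueryMaps N k t) (h : Fin t → Fin k → ℝ) (x : Fin N → ℝ) :
    sqNorm (stack Q h *ᵥ x) = ∑ i, sqNorm (queryAt Q h i *ᵥ x) := by
  rw [sqNorm, Fintype.sum_prod_type]
  rfl

lemma queryAt_zero (Q : QueryMaps N k (t + 1)) (h : Fin (t + 1) → Fin k → ℝ) :
    queryAt Q h 0 = Q 0 Fin.elim0 :=
  congrArg (Q 0) (funext fun l => l.elim0)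

lemma queryAt_cons_succ (Q : QueryMaps N k (t + 1)) (w : Fin k → ℝ) (h : Fin t → Fin k → ℝ)
    (i : Fin t) : queryAt Q (Fin.cons w h) i.succ = queryAt (Q.tail w) h i :=
  congrArg (Q i.succ) (funext fun l => Fin.cases rfl (fun _ => rfl) l)

lemma queryAt_congr {Q : QueryMaps N k (t + 1)} {h h' : Fin (t + 1) → Fin k → ℝ}
    (hh : Fin.init h = Fin.init h') (i : Fin (t + 1)) : queryAt Q h i = queryAt Q h' i :=
  congrArg (Q i) (funext fun l => congrFun hh ⟨l, by omega⟩)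

lemma stack_congr {Q : QueryMaps N k (t + 1)} {h h' : Fin (t + 1) → Fin k → ℝ}
    (hh : Fin.init h = Fin.init h') : stack Q h = stack Q h' := by
  simp only [stack, queryAt_congr hh]

lemma likelihood_cons (Q : QueryMaps N k (t + 1)) (x : Fin N → ℝ) (w : Fin k → ℝ)
    (h : Fin t → Fin k → ℝ) :
    likelihood Q x (Fin.cons w h)
      = gaussianShiftDensity (Q 0 Fin.elim0 *ᵥ x) w * likelihood (Q.tail w) x h := by
  simp only [likelihood, Fin.prod_univ_succ, queryAt_zero, queryAt_cons_succ, Fin.cons_zero,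
    Fin.cons_succ]

lemma likelihood_sq (Q : QueryMaps N k t) (x : Fin N → ℝ) (h : Fin t → Fin k → ℝ) :
    likelihood Q x h ^ 2
      = ENNReal.ofReal (Real.exp (sqNorm (stack Q h *ᵥ x))) * likelihood Q ((2 : ℝ) • x) h := by
  rw [sqNorm_stack_mulVec, Real.exp_sum, ENNReal.ofReal_prod_of_nonneg fun _ _ =>
    (Real.exp_pos _).le]
  simp only [likelihood, ← Finset.prod_pow, gaussianShiftDensity_sq, Finset.prod_mul_distrib,
    mulVec_smul]

lemma resp_eq_queryAt_mulVec (Q : QueryMaps N k t) (a : Fin N → ℝ) (i : Fin t) :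
    resp Q a i = queryAt Q (resp Q a) i *ᵥ a := by
  rw [resp]; rfl

lemma eq_resp {Q : QueryMaps N k t} {a : Fin N → ℝ} {h : Fin t → Fin k → ℝ}
    (hh : ∀ i, h i = queryAt Q h i *ᵥ a) : h = resp Q a := by
  have agree : ∀ (m : ℕ) (hm : m < t), h ⟨m, hm⟩ = resp Q a ⟨m, hm⟩ := by
    intro m
    induction m using Nat.strong_induction_on with
    | _ m ih =>
      intro hm
      rw [hh, resp_eq_queryAt_mulVec]
      exact congrArg (fun g => Q ⟨m, hm⟩ g *ᵥ a) (funext fun l => ih l l.isLt _)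
  exact funext fun i => agree i i.isLt

lemma init_resp (Q : QueryMaps N k (t + 1)) (a : Fin N → ℝ) :
    Fin.init (resp Q a) = resp Q.init a :=
  eq_resp fun i => resp_eq_queryAt_mulVec Q a i.castSucc

lemma resp_eq_cons (Q : QueryMaps N k (t + 1)) (a : Fin N → ℝ) :
    resp Q a = Fin.cons (Q 0 Fin.elim0 *ᵥ a) (resp (Q.tail (Q 0 Fin.elim0 *ᵥ a)) a) := by
  refine (eq_resp fun i => ?_).symm
  cases i using Fin.cases with
  | zero => rw [queryAt_zero, Fin.cons_zero]
  | succ i => rw [queryAt_cons_succ, Fin.cons_succ, ← resp_eq_queryAt_mulVec]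

namespace Valid

variable {Q : QueryMaps N k t}

lemma queryAt_mul_transpose_of_lt (hQ : Q.Valid) (h : Fin t → Fin k → ℝ) {i j : Fin t}
    (hij : i < j) : queryAt Q h j * (queryAt Q h i)ᵀ = 0 :=
  hQ.2.2 j i hij _

lemma stack_mul_transpose (hQ : Q.Valid) (h : Fin t → Fin k → ℝ) :
    stack Q h * (stack Q h)ᵀ = 1 := by
  ext ⟨i, a⟩ ⟨j, b⟩
  change (queryAt Q h i * (queryAt Q h j)ᵀ) a b = (1 : Matrix _ _ ℝ) (i, a) (j, b)
  rcases lt_trichotomy i j with hij | rfl | hij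
  · rw [one_apply_ne (by simp [hij.ne]), ← transpose_transpose (queryAt Q h i),
      ← transpose_mul, hQ.queryAt_mul_transpose_of_lt h hij]
    rfl
  · rw [show queryAt Q h i * (queryAt Q h i)ᵀ = 1 from hQ.2.1 i _]
    simp [one_apply]
  · rw [one_apply_ne (by simp [hij.ne']), hQ.queryAt_mul_transpose_of_lt h hij]
    rfl

lemma init {Q : QueryMaps N k (t + 1)} (hQ : Q.Valid) : Q.init.Valid :=
  ⟨fun j => hQ.1 j.castSucc, fun j => hQ.2.1 j.castSucc,
    fun j i hij => hQ.2.2 j.castSucc i.castSucc hij⟩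

lemma tail {Q : QueryMaps N k (t + 1)} (hQ : Q.Valid) (r : Fin k → ℝ) : (Q.tail r).Valid := by
  refine ⟨fun j i l => (hQ.1 j.succ i l).comp ?_, fun j h => hQ.2.1 j.succ _,
    fun j i hij h => ?_⟩
  · exact measurable_finCons r
  · have prefixHist_cons : prefixHist (j := j.succ) (i := i.succ) (Fin.cons r h)
        (Nat.succ_lt_succ hij) = Fin.cons r (prefixHist h hij) :=
      funext fun m => Fin.cases rfl (fun _ => rfl) m
    rw [QueryMaps.tail, QueryMaps.tail, ← prefixHist_cons]
    exact hQ.2.2 j.succ i.succ (Nat.succ_lt_succ hij) (Fin.cons r h)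

lemma resp_tail_add_transpose_mulVec {Q : QueryMaps N k (t + 1)} (hQ : Q.Valid)
    (r v : Fin k → ℝ) (a : Fin N → ℝ) :
    resp (Q.tail r) (a + (Q 0 Fin.elim0)ᵀ *ᵥ v) = resp (Q.tail r) a := by
  refine (eq_resp fun i => ?_).symm
  have orthogonal := hQ.queryAt_mul_transpose_of_lt (Fin.cons r (resp (Q.tail r) a)) i.succ_pos
  rw [queryAt_zero, queryAt_cons_succ] at orthogonal
  rw [mulVec_add, mulVec_mulVec, orthogonal, zero_mulVec, add_zero, ← resp_eq_queryAt_mulVec]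

lemma measurable_queryAt_mulVec (hQ : Q.Valid) (i : Fin t) {α : Type*} [MeasurableSpace α]
    {h : α → Fin t → Fin k → ℝ} {x : α → Fin N → ℝ} (hh : Measurable h) (hx : Measurable x) :
    Measurable fun a => queryAt Q (h a) i *ᵥ x a :=
  measurable_mulVec (fun j l => (hQ.1 i j l).comp (by fun_prop)) hx

lemma measurable_resp (hQ : Q.Valid) : Measurable (resp Q) := by
  have measurable_round : ∀ (m : ℕ) (hm : m < t), Measurable fun a => resp Q a ⟨m, hm⟩ := by
    intro m
    induction m using Nat.strong_induction_on with
    | _ m ih =>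
      intro hm
      simp only [resp_eq_queryAt_mulVec]
      exact measurable_mulVec (fun i l => (hQ.1 ⟨m, hm⟩ i l).comp
        (measurable_pi_iff.2 fun j => ih j j.isLt _)) measurable_id
  exact measurable_pi_iff.2 fun i => measurable_round i i.isLt

lemma measurable_likelihood (hQ : Q.Valid) {α : Type*} [MeasurableSpace α]
    {h : α → Fin t → Fin k → ℝ} {x : α → Fin N → ℝ} (hh : Measurable h) (hx : Measurable x) :
    Measurable fun a => likelihood Q (x a) (h a) :=
  Finset.measurable_prod _ fun i _ => measurable_gaussianShiftDensity
    (hQ.measurable_queryAt_mulVec i hh hx) ((measurable_pi_apply i).comp hh)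

lemma measurable_sqNorm_stack_mulVec (hQ : Q.Valid) {α : Type*} [MeasurableSpace α]
    {h : α → Fin t → Fin k → ℝ} {x : α → Fin N → ℝ} (hh : Measurable h) (hx : Measurable x) :
    Measurable fun a => sqNorm (stack Q (h a) *ᵥ x a) := by
  simp only [sqNorm_stack_mulVec]
  exact Finset.measurable_sum _ fun i _ =>
    measurable_sqNorm.comp (hQ.measurable_queryAt_mulVec i hh hx)

/-- Conditioning on the first response `w` resamples the component of the input along the first
query, which the later queries, being orthogonal to it, do not see. -/
lemma lintegral_resp_add_stdGaussian (hQ : Q.Valid) (x : Fin N → ℝ)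
    {F : (Fin t → Fin k → ℝ) → ℝ≥0∞} (hF : Measurable F) :
    ∫⁻ y, F (resp Q (y + x)) ∂stdGaussian (Fin N)
      = ∫⁻ h, likelihood Q x h * F h ∂gaussianResponses k t := by
  induction t with
  | zero =>
    have apply_elim0 (h : Fin 0 → Fin k → ℝ) : F h = F Fin.elim0 := by
      rw [Subsingleton.elim h Fin.elim0]
    simp_rw [apply_elim0, likelihood, Finset.univ_eq_empty, Finset.prod_empty]
    simp
  | succ t ih =>
    set A := Q 0 Fin.elim0
    have hA : A * Aᵀ = 1 := hQ.2.1 0 _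
    have resp_resample (y : Fin N → ℝ) (w : Fin k → ℝ) :
        resp Q (y + x + Aᵀ *ᵥ (w - A *ᵥ (y + x))) = Fin.cons w (resp (Q.tail w) (y + x)) := by
      have first_response : A *ᵥ (y + x + Aᵀ *ᵥ (w - A *ᵥ (y + x))) = w := by
        rw [mulVec_add A (y + x), mulVec_mulVec, hA, one_mulVec, add_sub_cancel]
      rw [resp_eq_cons, first_response, hQ.resp_tail_add_transpose_mulVec]
    calc ∫⁻ y, F (resp Q (y + x)) ∂stdGaussian (Fin N)
        = ∫⁻ w, gaussianShiftDensity (A *ᵥ x) w *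
            ∫⁻ y, F (Fin.cons w (resp (Q.tail w) (y + x))) ∂stdGaussian (Fin N)
            ∂stdGaussian (Fin k) := by
          simpa only [Function.comp_apply, resp_resample] using
            lintegral_stdGaussian_add_eq hA x (hF.comp hQ.measurable_resp)
      _ = ∫⁻ w, ∫⁻ h, likelihood Q x (Fin.cons w h) * F (Fin.cons w h)
            ∂gaussianResponses k t ∂stdGaussian (Fin k) := by
          refine lintegral_congr fun w => ?_
          rw [ih (hQ.tail w) (F := fun h => F (Fin.cons w h)) (hF.comp (measurable_finCons w)),
            ← lintegral_const_mul' (gaussianShiftDensity _ w) _ ENNReal.ofReal_ne_top]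
          simp_rw [likelihood_cons, mul_assoc]
          rfl
      _ = ∫⁻ h, likelihood Q x h * F h ∂gaussianResponses k (t + 1) :=
          (lintegral_gaussianResponses_succ
            ((hQ.measurable_likelihood measurable_id measurable_const).mul hF)).symm

lemma lintegral_likelihood (hQ : Q.Valid) (x : Fin N → ℝ) :
    ∫⁻ h, likelihood Q x h ∂gaussianResponses k t = 1 := by
  simpa using (hQ.lintegral_resp_add_stdGaussian x (F := fun _ => 1) measurable_const).symm

variable {μ : Measure (Fin N → ℝ)} [SFinite μ]

lemma prod_resp_mem_eq_setLIntegral (hQ : Q.Valid) (s : ℝ)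
    {S : Set ((Fin t → Fin k → ℝ) × (Fin N → ℝ))} (hS : MeasurableSet S) :
    (stdGaussian (Fin N)).prod μ {p | (resp Q (p.1 + s • p.2), p.2) ∈ S}
      = ∫⁻ p in S, likelihood Q (s • p.2) p.1 ∂(gaussianResponses k t).prod μ := by
  have measurable_event :
      MeasurableSet {p : (Fin N → ℝ) × (Fin N → ℝ) | (resp Q (p.1 + s • p.2), p.2) ∈ S} :=
    ((hQ.measurable_resp.comp (by fun_prop)).prodMk measurable_snd) hS
  have measurable_indicator_one : Measurable (S.indicator fun _ => (1 : ℝ≥0∞)) :=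
    measurable_const.indicator hS
  have measurable_likelihood := hQ.measurable_likelihood
    (h := fun p : (Fin t → Fin k → ℝ) × (Fin N → ℝ) => p.1) (x := fun p => s • p.2)
    measurable_fst (by fun_prop)
  have indicator_eq_mul (h : Fin t → Fin k → ℝ) (x : Fin N → ℝ) :
      S.indicator (fun p => likelihood Q (s • p.2) p.1) (h, x)
        = likelihood Q (s • x) h * S.indicator (fun _ => 1) (h, x) := by
    by_cases hx : (h, x) ∈ S <;> simp [hx]
  calc (stdGaussian (Fin N)).prod μ {p | (resp Q (p.1 + s • p.2), p.2) ∈ S}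
      = ∫⁻ x, ∫⁻ y, S.indicator (fun _ => 1) (resp Q (y + s • x), x) ∂stdGaussian (Fin N) ∂μ := by
        rw [Measure.prod_apply_symm measurable_event]
        refine lintegral_congr fun x => ?_
        rw [← lintegral_indicator_one (measurable_prodMk_right measurable_event)]
        rfl
    _ = ∫⁻ x, ∫⁻ h, S.indicator (fun p => likelihood Q (s • p.2) p.1) (h, x)
          ∂gaussianResponses k t ∂μ := lintegral_congr fun x => by
        simpa only [indicator_eq_mul, Function.comp_apply] using
          hQ.lintegral_resp_add_stdGaussian (s • x)
            (measurable_indicator_one.comp (measurable_prodMk_right (y := x)))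
    _ = ∫⁻ p in S, likelihood Q (s • p.2) p.1 ∂(gaussianResponses k t).prod μ := by
        rw [← lintegral_indicator hS,
          lintegral_prod_symm _ (measurable_likelihood.indicator hS).aemeasurable]

/-- On `S` the square of the likelihood is at most `exp (s² T)` times the likelihood for the
doubled plant, so Cauchy–Schwarz compares the run with Gaussian responses independent of the
plant. -/
lemma prod_resp_mem_le (hQ : Q.Valid) (hμ : μ Set.univ ≤ 1) {s T d : ℝ}
    {S : Set ((Fin t → Fin k → ℝ) × (Fin N → ℝ))} (hS : MeasurableSet S)
    (hT : ∀ p ∈ S, sqNorm (stack Q p.1 *ᵥ p.2) ≤ T)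
    (hd : ∀ h, μ {x | (h, x) ∈ S} ≤ ENNReal.ofReal (Real.exp d)) :
    (stdGaussian (Fin N)).prod μ {p | (resp Q (p.1 + s • p.2), p.2) ∈ S}
      ≤ ENNReal.ofReal (Real.exp ((s ^ 2 * T + d) / 2)) := by
  have measurable_likelihood (c : ℝ) :
      Measurable fun p : (Fin t → Fin k → ℝ) × (Fin N → ℝ) => likelihood Q (c • p.2) p.1 :=
    hQ.measurable_likelihood measurable_fst (by fun_prop)
  rw [hQ.prod_resp_mem_eq_setLIntegral s hS]
  refine setLIntegral_le_ofReal_exp _ (l₂ := fun p => likelihood Q ((2 * s) • p.2) p.1)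
    (measurable_likelihood s) hS (fun p hp => ?_) ?_ ?_
  · rw [likelihood_sq, mulVec_smul, sqNorm_smul, smul_smul]
    gcongr
    exact hT p hp
  · rw [lintegral_prod_symm _ (measurable_likelihood _).aemeasurable]
    simpa only [hQ.lintegral_likelihood, lintegral_one] using hμ
  · rw [Measure.prod_apply hS]
    calc ∫⁻ h, μ (Prod.mk h ⁻¹' S) ∂gaussianResponses k t
        ≤ ∫⁻ _, ENNReal.ofReal (Real.exp d) ∂gaussianResponses k t := lintegral_mono hd
      _ = ENNReal.ofReal (Real.exp d) := by simp

lemma prod_sqNorm_runMat_jump_le {Q : QueryMaps N k (t + 1)} (hQ : Q.Valid)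
    (hμ : μ Set.univ ≤ 1) {s T T' d : ℝ}
    (hd : ∀ R : Matrix (Fin (t + 1) × Fin k) (Fin N) ℝ, R * Rᵀ = 1 →
      μ {x | T' < sqNorm (R *ᵥ x)} ≤ ENNReal.ofReal (Real.exp d)) :
    (stdGaussian (Fin N)).prod μ
        {p | sqNorm (runMat Q.init (p.1 + s • p.2) *ᵥ p.2) ≤ T ∧
          T' < sqNorm (runMat Q (p.1 + s • p.2) *ᵥ p.2)}
      ≤ ENNReal.ofReal (Real.exp ((s ^ 2 * T + d) / 2)) := by
  -- The last response does not influence the queries, so it may be replaced by `0`.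
  have stack_eq (a : Fin N → ℝ) :
      stack Q (resp Q a) = stack Q (Fin.snoc (resp Q.init a) 0) :=
    stack_congr (by rw [init_resp, Fin.init_snoc])
  have measurable_snoc : Measurable fun p : (Fin t → Fin k → ℝ) × (Fin N → ℝ) =>
      (Fin.snoc p.1 0 : Fin (t + 1) → Fin k → ℝ) :=
    measurable_pi_iff.2 fun i => by
      cases i using Fin.lastCases with
      | last => simp
      | cast i => simpa using (by fun_prop)
  simp only [runMat_eq_stack, stack_eq]
  let S : Set ((Fin t → Fin k → ℝ) × (Fin N → ℝ)) :=
    {p | sqNorm (stack Q.init p.1 *ᵥ p.2) ≤ T ∧ T' < sqNorm (stack Q (Fin.snoc p.1 0) *ᵥ p.2)}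
  have hS : MeasurableSet S :=
    (measurableSet_le (hQ.init.measurable_sqNorm_stack_mulVec measurable_fst measurable_snd)
      measurable_const).inter (measurableSet_lt measurable_const
      (hQ.measurable_sqNorm_stack_mulVec measurable_snoc measurable_snd))
  refine hQ.init.prod_resp_mem_le hμ hS (fun p hp => hp.1) fun h => ?_
  exact (measure_mono fun x hx => hx.2).trans
    (hd (stack Q (Fin.snoc h 0)) (hQ.stack_mul_transpose _))

theorem prod_lt_sqNorm_runMat_le (hQ : Q.Valid) (hμ : μ Set.univ ≤ 1) {s : ℝ} {T d : ℕ → ℝ}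
    (hT : 0 ≤ T 0)
    (hd : ∀ (j : ℕ) (R : Matrix (Fin (j + 1) × Fin k) (Fin N) ℝ), R * Rᵀ = 1 →
      μ {x | T (j + 1) < sqNorm (R *ᵥ x)} ≤ ENNReal.ofReal (Real.exp (d j))) :
    (stdGaussian (Fin N)).prod μ {p | T t < sqNorm (runMat Q (p.1 + s • p.2) *ᵥ p.2)}
      ≤ ∑ j ∈ Finset.range t, ENNReal.ofReal (Real.exp ((s ^ 2 * T j + d j) / 2)) := by
  induction t with
  | zero => simp [runMat_eq_stack, sqNorm_stack_mulVec, hT.not_gt]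
  | succ t ih =>
    rw [Finset.sum_range_succ]
    refine (measure_mono fun p hp => ?_).trans ((measure_union_le _ _).trans
      (add_le_add (ih hQ.init) (hQ.prod_sqNorm_runMat_jump_le hμ (T := T t) (hd t))))
    exact (lt_or_ge (T t) _).imp_right fun h => ⟨h, hp⟩

end Valid

end QueryMaps

section Thresholds

/-- The level `T_j = 3 K k (K α² γ²)^j`, with `K = 120`, that `‖Q (u ⊗ v)‖²` should not exceed
after `j` rounds. -/
def infoThreshold (k : ℕ) (α γ : ℝ) (j : ℕ) : ℝ := 3 * 120 * k * (120 * α ^ 2 * γ ^ 2) ^ j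

lemma infoThreshold_succ (k : ℕ) (α γ : ℝ) (j : ℕ) :
    infoThreshold k α γ (j + 1) = 120 * α ^ 2 * γ ^ 2 * infoThreshold k α γ j := by
  rw [infoThreshold, infoThreshold, pow_succ]
  ring

lemma mul_two_pow_le_infoThreshold (k : ℕ) {α γ : ℝ} (hα : 1 ≤ α) (hγ : 1 ≤ γ) (j : ℕ) :
    360 * k * 2 ^ j ≤ infoThreshold k α γ j := by
  have two_le_growth : 2 ≤ 120 * α ^ 2 * γ ^ 2 := by
    nlinarith [one_le_pow₀ hα (n := 2), one_le_pow₀ hγ (n := 2)]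
  rw [infoThreshold]
  gcongr
  norm_num

lemma half_exponent_le {n k : ℕ} {α γ : ℝ} (hn : 0 < n) (hk : n ≤ k) (hα : 1 ≤ α) (hγ : 1 ≤ γ)
    (j : ℕ) :
    (α ^ 2 / n * infoThreshold k α γ j
        + (4 * ((j + 1) * k) - infoThreshold k α γ (j + 1)) / (24 * n)) / 2
      ≤ -(360 * γ * 2 ^ j) := by
  have one_le_ratio : 1 ≤ (k : ℝ) / n :=
    (one_le_div (by positivity)).2 (by exact_mod_cast hk)
  have succ_le : (j : ℝ) + 1 ≤ 2 ^ j := by exact_mod_cast Nat.lt_two_pow_self (n := j)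
  set A : ℝ := α ^ 2 / n * infoThreshold k α γ j with hA
  have le_A : 360 * 2 ^ j * (k / n) ≤ A :=
    calc 360 * 2 ^ j * ((k : ℝ) / n) = 1 * (360 * k * 2 ^ j) / n := by ring
      _ ≤ α ^ 2 * infoThreshold k α γ j / n := by
          gcongr
          · exact one_le_pow₀ hα
          · exact mul_two_pow_le_infoThreshold k hα hγ j
      _ = A := by ring
  have mean_le : ((j : ℝ) + 1) * (k / n) / 6 ≤ A := by nlinarith
  have A_le : A ≤ γ ^ 2 * A :=
    le_mul_of_one_le_left (le_trans (by positivity) le_A) (one_le_pow₀ hγ)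
  have growth : 360 * γ * 2 ^ j ≤ γ ^ 2 * A :=
    calc 360 * γ * 2 ^ j = γ * (360 * 2 ^ j * 1) := by ring
      _ ≤ γ ^ 2 * A := by
          gcongr
          · exact le_self_pow₀ hγ two_ne_zero
          · exact le_trans (by gcongr) le_A
  calc _ = (A + (((j : ℝ) + 1) * (k / n) / 6 - 5 * (γ ^ 2 * A))) / 2 := by
        rw [hA, infoThreshold_succ]
        field_simp
        ring
    _ ≤ -(γ ^ 2 * A) := by linarith [show 0 ≤ 360 * γ * 2 ^ j by positivity]
    _ ≤ -(360 * γ * 2 ^ j) := neg_le_neg growth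

lemma exp_half_exponent_le {n k : ℕ} {α γ : ℝ} (hn : 0 < n) (hk : n ≤ k) (hα : 1 ≤ α)
    (hγ : 1 ≤ γ) (j : ℕ) :
    Real.exp ((α ^ 2 / n * infoThreshold k α γ j
        + (4 * ((j + 1) * k) - infoThreshold k α γ (j + 1)) / (24 * n)) / 2)
      ≤ (1 / 2) ^ j / (20 * γ) := by
  calc _ ≤ Real.exp (-(20 * γ * 2 ^ j)) := by
        refine Real.exp_le_exp.2 ((half_exponent_le hn hk hα hγ j).trans (neg_le_neg ?_))
        gcongr
        norm_num
    _ ≤ (20 * γ * 2 ^ j)⁻¹ := by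
        rw [Real.exp_neg]
        exact inv_anti₀ (by positivity) (by linarith [Real.add_one_le_exp (20 * γ * 2 ^ j)])
    _ = (1 / 2) ^ j / (20 * γ) := by
        rw [mul_inv, one_div, inv_pow]
        ring

lemma one_sub_pow_le_one_sub_geom {x : ℝ} (h0 : 0 ≤ x) (h1 : x ≤ 1) (t : ℕ) :
    (1 - x) ^ t ≤ 1 - (1 - (1 / 2) ^ t) * x := by
  induction t with
  | zero => simp
  | succ t ih =>
    have half_pow_le_one : (1 / 2 : ℝ) ^ t ≤ 1 := pow_le_one₀ (by norm_num) (by norm_num)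
    have half_pow_pos : 0 < (1 / 2 : ℝ) ^ t := by positivity
    calc (1 - x) ^ (t + 1) = (1 - x) ^ t * (1 - x) := pow_succ _ _
      _ ≤ (1 - (1 - (1 / 2) ^ t) * x) * (1 - x) :=
          mul_le_mul_of_nonneg_right ih (by linarith)
      _ ≤ 1 - (1 - (1 / 2) ^ (t + 1)) * x := by
          rw [pow_succ]
          nlinarith [mul_nonneg (mul_nonneg h0 (sub_nonneg.2 h1)) (sub_nonneg.2 half_pow_le_one),
            mul_nonneg h0 half_pow_pos.le]

lemma one_sub_pow_sub_rpow_le {n : ℕ} {γ : ℝ} (hn : 0 < n) (hγ : 1 ≤ γ) (t : ℕ) :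
    (1 - 1 / (10 * γ)) ^ t - (n : ℝ) ^ (-1 : ℝ)
      ≤ 1 - (1 - (1 / 2) ^ t) / (10 * γ) - Real.exp (-n) := by
  have exp_le : Real.exp (-n) ≤ (n : ℝ) ^ (-1 : ℝ) := by
    rw [Real.rpow_neg_one, Real.exp_neg]
    exact inv_anti₀ (by exact_mod_cast hn) (by linarith [Real.add_one_le_exp (n : ℝ)])
  have pow_le := one_sub_pow_le_one_sub_geom (x := 1 / (10 * γ)) (by positivity)
    ((div_le_one (by positivity)).2 (by linarith)) t
  rw [mul_one_div] at pow_le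
  linarith

end Thresholds

section PlantedMatrix

lemma measurable_vec (n : ℕ) : Measurable fun M : Fin n → Fin n → ℝ => vec n (of M) := by
  simp only [measurable_pi_iff, _root_.vec, of_apply]
  fun_prop

lemma stdGaussianMat_map_vec (n : ℕ) :
    (stdGaussianMat n).map (fun M => vec n (of M)) = stdGaussian (Fin (n * n)) := by
  refine (Measure.pi_eq fun s hs => ?_).symm
  have preimage_eq : (fun M : Fin n → Fin n → ℝ => vec n (of M)) ⁻¹' Set.univ.pi s
      = Set.univ.pi fun i => Set.univ.pi fun j => s (finProdFinEquiv (i, j)) := by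
    ext M
    simp only [Set.mem_preimage, Set.mem_univ_pi, _root_.vec, of_apply,
      ← finProdFinEquiv.forall_congr_right, Equiv.symm_apply_apply, Prod.forall]
  rw [Measure.map_apply (measurable_vec n) (MeasurableSet.univ_pi hs), preimage_eq,
    stdGaussianMat, Measure.pi_pi]
  simp_rw [_root_.stdGaussian, Measure.pi_pi]
  rw [← Fintype.prod_prod_type' fun i j => gaussianReal 0 1 (s (finProdFinEquiv (i, j)))]
  exact Equiv.prod_comp finProdFinEquiv fun p => gaussianReal 0 1 (s p)

instance isProbabilityMeasure_stdGaussianMat (n : ℕ) :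
    IsProbabilityMeasure (stdGaussianMat n) := by
  unfold stdGaussianMat; infer_instance

instance sFinite_truncatedPlant (n : ℕ) : SFinite (truncatedPlant n) := by
  unfold truncatedPlant; infer_instance

lemma prod_truncatedPlant_eq_map (n : ℕ) :
    (stdGaussian (Fin (n * n))).prod (truncatedPlant n)
      = (((stdGaussianMat n).prod ((stdGaussian (Fin n)).prod (stdGaussian (Fin n)))).restrict
          {p | sqNorm p.2.1 ≤ 6 * n}).map
          fun p => (vec n (of p.1), tensor p.2.1 p.2.2) := by
  have event_eq : {p : (Fin n → Fin n → ℝ) × ((Fin n → ℝ) × (Fin n → ℝ)) | sqNorm p.2.1 ≤ 6 * n}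
      = Set.univ ×ˢ ({u | sqNorm u ≤ 6 * n} ×ˢ Set.univ) := by
    ext p; simp
  rw [event_eq, ← Measure.prod_restrict, ← Measure.prod_restrict, Measure.restrict_univ,
    Measure.restrict_univ, ← stdGaussianMat_map_vec, truncatedPlant,
    Measure.map_prod_map _ _ (measurable_vec n) measurable_tensor]
  rfl

lemma prod_planted_mem_le (n : ℕ) {E : Set ((Fin (n * n) → ℝ) × (Fin (n * n) → ℝ))}
    (hE : MeasurableSet E) :
    (stdGaussianMat n).prod ((stdGaussian (Fin n)).prod (stdGaussian (Fin n)))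
        {p | (vec n (of p.1), tensor p.2.1 p.2.2) ∈ E}
      ≤ (stdGaussian (Fin (n * n))).prod (truncatedPlant n) E
        + ENNReal.ofReal (Real.exp (-n)) := by
  have measurable_pair : Measurable fun p : (Fin n → Fin n → ℝ) × ((Fin n → ℝ) × (Fin n → ℝ)) =>
      (vec n (of p.1), tensor p.2.1 p.2.2) :=
    ((measurable_vec n).comp measurable_fst).prodMk (measurable_tensor.comp measurable_snd)
  rw [prod_truncatedPlant_eq_map, Measure.map_apply measurable_pair hE,
    Measure.restrict_apply (measurable_pair hE)]
  refine (measure_le_inter_add_sdiff _ _ {p | sqNorm p.2.1 ≤ 6 * n}).trans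
    (add_le_add le_rfl ?_)
  calc _ ≤ (stdGaussianMat n).prod ((stdGaussian (Fin n)).prod (stdGaussian (Fin n)))
          (Set.univ ×ˢ ({u | 6 * n < sqNorm u} ×ˢ Set.univ)) :=
        measure_mono fun p hp => by simpa using hp.2
    _ = stdGaussian (Fin n) {u | 6 * n < sqNorm u} := by simp [Measure.prod_prod]
    _ ≤ ENNReal.ofReal (Real.exp (-n)) := by
        simpa using stdGaussian_six_mul_card_lt_sqNorm_le (ι := Fin n)

end PlantedMatrix

section Bound

variable {n k t : ℕ} {α γ : ℝ} {Q : QueryMaps (n * n) k t}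

lemma prod_truncatedPlant_lt_sqNorm_runMat_le (hn : 0 < n) (hk : n ≤ k) (hα : 1 ≤ α) (hγ : 1 ≤ γ)
    (hQ : Q.Valid) :
    (stdGaussian (Fin (n * n))).prod (truncatedPlant n)
        {p | infoThreshold k α γ t
          < sqNorm (QueryMaps.runMat Q (p.1 + (α / Real.sqrt n) • p.2) *ᵥ p.2)}
      ≤ ENNReal.ofReal ((1 - (1 / 2) ^ t) / (10 * γ)) := by
  have s_sq : (α / Real.sqrt n) ^ 2 = α ^ 2 / n := by
    rw [div_pow, Real.sq_sqrt n.cast_nonneg]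
  have geom_sum : ∑ j ∈ Finset.range t, (1 / 2 : ℝ) ^ j / (20 * γ)
      = (1 - (1 / 2) ^ t) / (10 * γ) := by
    rw [← Finset.sum_div, geom_sum_eq (by norm_num)]
    field_simp
    ring
  refine (hQ.prod_lt_sqNorm_runMat_le (truncatedPlant_univ_le n) (T := infoThreshold k α γ)
    (d := fun j => (4 * ((j + 1) * k) - infoThreshold k α γ (j + 1)) / (24 * n))
    (by unfold infoThreshold; positivity) fun j R hR => ?_).trans ?_
  · simpa using truncatedPlant_lt_sqNorm_mulVec_le hn hR (infoThreshold k α γ (j + 1))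
  · rw [← geom_sum, ENNReal.ofReal_sum_of_nonneg fun j _ => by positivity, s_sq]
    exact Finset.sum_le_sum fun j _ =>
      ENNReal.ofReal_le_ofReal (exp_half_exponent_le hn hk hα hγ j)

theorem rank_one_plant_information_bound_general (hn : 0 < n) (hk : n ≤ k) (hα : 1 ≤ α)
    (hγ : 1 ≤ γ) (hQ : Q.Valid) :
    ENNReal.ofReal (1 - (1 - (1 / 2) ^ t) / (10 * γ) - Real.exp (-n)) ≤
      ((stdGaussianMat n).prod ((stdGaussian (Fin n)).prod (stdGaussian (Fin n))))
        {p | sqNorm (QueryMaps.runMat Q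
              (vec n (of p.1) + (α / Real.sqrt n) • tensor p.2.1 p.2.2) *ᵥ tensor p.2.1 p.2.2)
            ≤ 3 * 120 * k * (120 * α ^ 2 * γ ^ 2) ^ t} := by
  let E : Set ((Fin (n * n) → ℝ) × (Fin (n * n) → ℝ)) :=
    {p | infoThreshold k α γ t
      < sqNorm (QueryMaps.runMat Q (p.1 + (α / Real.sqrt n) • p.2) *ᵥ p.2)}
  have hE : MeasurableSet E := measurableSet_lt measurable_const
    (hQ.measurable_sqNorm_stack_mulVec (hQ.measurable_resp.comp (by fun_prop)) measurable_snd)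
  have geom_nonneg : 0 ≤ (1 - (1 / 2 : ℝ) ^ t) / (10 * γ) :=
    div_nonneg (sub_nonneg.2 (pow_le_one₀ (by norm_num) (by norm_num))) (by positivity)
  have failure := (prod_planted_mem_le n hE).trans
    (add_le_add_left (prod_truncatedPlant_lt_sqNorm_runMat_le hn hk hα hγ hQ) _)
  rw [sub_sub, ENNReal.ofReal_sub _ (by positivity), ENNReal.ofReal_one,
    ENNReal.ofReal_add geom_nonneg (Real.exp_pos _).le]
  refine (tsub_le_tsub_left failure _).trans (tsub_le_iff_right.2 ?_)
  rw [← measure_univ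
    (μ := (stdGaussianMat n).prod ((stdGaussian (Fin n)).prod (stdGaussian (Fin n))))]
  refine (measure_mono fun p _ => ?_).trans (measure_union_le _ _)
  exact le_or_gt (sqNorm _) (infoThreshold k α γ t)

end Bound

/-- Main lemma: information growth bound for deterministic adaptive algorithms
on the rank-one planted Gaussian instance (Lemma 3.1 of the paper). -/
theorem rank_one_plant_information_bound :
    ∃ (K C₁ C₂ c : ℝ), 1 ≤ K ∧ 1 ≤ C₁ ∧ 1 ≤ C₂ ∧ 0 < c ∧
      ∀ (n k t : ℕ) (α γ : ℝ), 2 ≤ n → n ≤ k → 10 ≤ α → 1 ≤ γ →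
      ∀ Q : QueryMaps (n * n) k t, Q.Valid →
      C₁ * k * Real.log n ≤ (K * α ^ 2 * γ ^ 2) ^ t * k →
      (K * α ^ 2 * γ ^ 2) ^ t * k ≤ C₂ * (n : ℝ) ^ 2 →
      ENNReal.ofReal ((1 - 1 / (10 * γ)) ^ t - (n : ℝ) ^ (-c)) ≤
        ((stdGaussianMat n).prod ((stdGaussian (Fin n)).prod (stdGaussian (Fin n))))
          {p | sqNorm ((QueryMaps.runMat Q
                  (vec n (Matrix.of p.1) +
                    (α / Real.sqrt n) • tensor p.2.1 p.2.2)).mulVec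
                (tensor p.2.1 p.2.2))
              ≤ 3 * K * k * (K * α ^ 2 * γ ^ 2) ^ t} := by
  refine ⟨120, 1, 1, 1, by norm_num, le_rfl, le_rfl, one_pos, ?_⟩
  intro n k t α γ hn hk hα hγ Q hQ _ _
  exact (ENNReal.ofReal_le_ofReal (one_sub_pow_sub_rpow_le (by omega) hγ t)).trans
    (rank_one_plant_information_bound_general (by omega) hk (by linarith) hγ hQ)

end
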